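/- Let a : [n] × [n] → ℝ be symmetric and satisfy the anti-tree-metric property a(i,j) + a(k,l) ≥ min(a(i,k)+a(j,l), a(i,l)+a(j,k)) for all distinct i,j,k,l. Let α* := min over distinct pairs of a(i,j), and define b_k := min_{j ≠ k} a(k,j) − α* for each k. Then the function (i,j) ↦ a(i,j) − b_i − b_j satisfies the anti-ultrametric property: a(i,j) − b_i − b_j ≥ min(a(i,k) − b_i − b_k, a(j,k) − b_j − b_k) for all distinct i,j,k. -/

import Mathlib

/-!
Call a symmetric `f` anti-tree if it satisfies the reversed four-point condition. If `f k l` is at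
most `f i l` and `f j l`, that is, if `k` minimises the row of `l`, then replacing both values by
`f k l` and cancelling it turns the four-point inequality for `i, j, k, l` into the three-point
inequality for `i, j, k`. So `f` is an anti-ultrametric once every `k` minimises the row of some
`l ≠ k`. The Farris transform keeps the four-point condition, and if `b x` is, up to a constant, the
minimum of `a x ·`, then `k` minimises the transformed row of any `l` where `a k ·` is minimal.
-/

section FarrisTransform

variable {ι R : Type*} [AddCommGroup R]

/-- The Farris transform of a pairwise function `a` by the weights `b`. -/
def farrisTransform (a : ι → ι → R) (b : ι → R) (i j : ι) : R :=
  a i j - b i - b j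

theorem farrisTransform_comm {a : ι → ι → R} (hsym : ∀ i j, a i j = a j i) (b : ι → R) (i j : ι) :
    farrisTransform a b i j = farrisTransform a b j i := by
  simp only [farrisTransform, hsym i j, sub_right_comm]

variable [LinearOrder R]

/-- The reverse of the four-point condition of a tree metric, imposed on distinct points only;
symmetry is not part of the notion, and values on the diagonal are ignored. -/
def IsAntiTreeMetric (a : ι → ι → R) : Prop :=
  ∀ i j k l, i ≠ j → i ≠ k → i ≠ l → j ≠ k → j ≠ l → k ≠ l →
    min (a i k + a j l) (a i l + a j k) ≤ a i j + a k l

/-- The reverse of the three-point condition of an ultrametric, imposed on distinct points only;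
symmetry is not part of the notion, and values on the diagonal are ignored. -/
def IsAntiUltrametric (a : ι → ι → R) : Prop :=
  ∀ i j k, i ≠ j → j ≠ k → i ≠ k → min (a i k) (a j k) ≤ a i j

variable [IsOrderedAddMonoid R]

theorem IsAntiTreeMetric.isAntiUltrametric {f : ι → ι → R} (hf : IsAntiTreeMetric f)
    (hsym : ∀ i j, f i j = f j i) (hmin : ∀ k, ∃ l ≠ k, ∀ x ≠ l, f l k ≤ f l x) :
    IsAntiUltrametric f := by
  intro i j k hij hjk hik
  obtain ⟨l, hlk, hl⟩ := hmin k
  obtain rfl | hli := eq_or_ne l i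
  · exact min_le_of_left_le (hl j hij.symm)
  obtain rfl | hlj := eq_or_ne l j
  · exact min_le_of_right_le ((hl i hij).trans_eq (hsym l i))
  have hki : f k l ≤ f i l := by simpa only [hsym l] using hl i hli.symm
  have hkj : f k l ≤ f j l := by simpa only [hsym l] using hl j hlj.symm
  refine le_of_add_le_add_right (a := f k l) ?_
  calc min (f i k) (f j k) + f k l
      = min (f i k + f k l) (f k l + f j k) := by rw [← min_add_add_right, add_comm (f j k)]
    _ ≤ min (f i k + f j l) (f i l + f j k) := by gcongr
    _ ≤ f i j + f k l := hf i j k l hij hik hli.symm hjk hlj.symm hlk.symm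

theorem isAntiTreeMetric_farrisTransform {a : ι → ι → R} (ha : IsAntiTreeMetric a) (b : ι → R) :
    IsAntiTreeMetric (farrisTransform a b) := by
  have hpair (p q r s : ι) : farrisTransform a b p q + farrisTransform a b r s =
      a p q + a r s - (b p + b q + b r + b s) := by
    simp only [farrisTransform]
    abel
  intro i j k l hij hik hil hjk hjl hkl
  calc min (farrisTransform a b i k + farrisTransform a b j l)
        (farrisTransform a b i l + farrisTransform a b j k)
      = min (a i k + a j l) (a i l + a j k) - (b i + b j + b k + b l) := by
        rw [hpair, hpair, ← min_sub_sub_right]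
        congr 2 <;> abel
    _ ≤ a i j + a k l - (b i + b j + b k + b l) := by
        gcongr
        exact ha i j k l hij hik hil hjk hjl hkl
    _ = farrisTransform a b i j + farrisTransform a b k l := (hpair i j k l).symm

theorem exists_forall_farrisTransform_le {a : ι → ι → R} {b : ι → R} {c : R}
    (hsym : ∀ i j, a i j = a j i)
    (hb : ∀ k, IsLeast {v | ∃ j, j ≠ k ∧ v = a k j} (b k + c)) (k : ι) :
    ∃ l ≠ k, ∀ x ≠ l, farrisTransform a b l k ≤ farrisTransform a b l x := by
  obtain ⟨l, hlk, hkl⟩ := (hb k).1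
  refine ⟨l, hlk, fun x hxl => ?_⟩
  have hxl_le : b x + c ≤ a x l := (hb x).2 ⟨l, hxl.symm, rfl⟩
  calc farrisTransform a b l k
      = b x + c - b l - b x := by rw [farrisTransform, hsym l k, ← hkl]; abel
    _ ≤ a x l - b l - b x := by gcongr
    _ = farrisTransform a b l x := by rw [farrisTransform, hsym l x]

theorem stmt3_general {a : ι → ι → R} {b : ι → R} {c : R} (hsym : ∀ i j, a i j = a j i)
    (htree : IsAntiTreeMetric a)
    (hb : ∀ k, IsLeast {v | ∃ j, j ≠ k ∧ v = a k j} (b k + c)) :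
    IsAntiUltrametric (farrisTransform a b) :=
  (isAntiTreeMetric_farrisTransform htree b).isAntiUltrametric (farrisTransform_comm hsym b)
    (exists_forall_farrisTransform_le hsym hb)

end FarrisTransform

/-- Farris transform: if a real symmetric `a` satisfies the
anti-tree-metric property, `α*` is the minimum of `a` over distinct pairs, and
`b k = min_{j≠k} a k j − α*`, then `(i,j) ↦ a i j − b i − b j` satisfies the
anti-ultrametric property. -/
theorem stmt3 (n : ℕ) (hn : 3 ≤ n) (a : Fin n → Fin n → ℝ)
    (hsym : ∀ i j, a i j = a j i)
    (htree : ∀ i j k l : Fin n, i ≠ j → i ≠ k → i ≠ l → j ≠ k → j ≠ l → k ≠ l →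
      a i j + a k l ≥ min (a i k + a j l) (a i l + a j k))
    (αstar : ℝ) (hα : IsLeast {v : ℝ | ∃ i j : Fin n, i ≠ j ∧ v = a i j} αstar)
    (b : Fin n → ℝ)
    (hb : ∀ k : Fin n, IsLeast {v : ℝ | ∃ j : Fin n, j ≠ k ∧ v = a k j} (b k + αstar)) :
    ∀ i j k : Fin n, i ≠ j → j ≠ k → i ≠ k →
      a i j - b i - b j ≥ min (a i k - b i - b k) (a j k - b j - b k) :=
  stmt3_general hsym htree hb
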